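/- arXiv:1709.01748 — 2 statements merged into one kernel-verified Lean document; each statement's English description precedes it below -/
import Mathlib

section
/- Let F be a Siegel cusp form of degree 2 and weight (j,k) on Γ₂ = Sp(4,ℤ), written in coordinates F = (F_0,…,F_j)ᵗ with respect to the basis x₁^{j−l}x₂^{l} of Sym^j(ℂ²), and for 0 ≤ l ≤ j define g_l(z₁,z₂) = F_l(diag(z₁,z₂)) for z₁, z₂ in the upper half plane ℍ₁. Then: (i) for each fixed z₂ ∈ ℍ₁, the function z₁ ↦ g_l(z₁,z₂) is a cusp form of weight j+k−l on SL(2,ℤ); (ii) for each fixed z₁ ∈ ℍ₁, the function z₂ ↦ g_l(z₁,z₂) is a cusp form of weight k+l on SL(2,ℤ); (iii) g_l(z₂,z₁) = (−1)^k g_{j−l}(z₁,z₂) for all z₁, z₂ ∈ ℍ₁. -/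
noncomputable section

open Matrix Complex Filter Topology

/-- The standard symplectic form matrix of size 4. -/
def J4 : Matrix (Fin 4) (Fin 4) ℤ := !![0,0,1,0; 0,0,0,1; -1,0,0,0; 0,-1,0,0]

/-- The Siegel modular group `Γ₂ = Sp(4,ℤ)`, as a set of 4×4 integer matrices. -/
def Sp4Z : Set (Matrix (Fin 4) (Fin 4) ℤ) := {γ | γᵀ * J4 * γ = J4}

/-- The principal congruence subgroup `Γ₂[2]` of level 2. -/
def Sp4Z2 : Set (Matrix (Fin 4) (Fin 4) ℤ) :=
  {γ | γ ∈ Sp4Z ∧ ∀ i j, ((γ i j : ZMod 2) = if i = j then 1 else 0)}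

/-- The Siegel upper half space of degree 2: symmetric 2×2 complex matrices with
positive definite imaginary part (encoded as functions `Fin 2 → Fin 2 → ℂ`). -/
def H2 : Set (Fin 2 → Fin 2 → ℂ) :=
  {τ | (Matrix.of τ).IsSymm ∧ (Matrix.of fun i j => (τ i j).im).PosDef}

/-- The four 2×2 blocks of a 4×4 integer matrix, as complex matrices. -/
def blk (γ : Matrix (Fin 4) (Fin 4) ℤ) (r s : Fin 2) : Matrix (Fin 2) (Fin 2) ℂ :=
  Matrix.of fun i j =>
    ((γ ⟨2 * (r : ℕ) + (i : ℕ), by have h1 := r.isLt; have h2 := i.isLt; omega⟩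
        ⟨2 * (s : ℕ) + (j : ℕ), by have h1 := s.isLt; have h2 := j.isLt; omega⟩ : ℤ) : ℂ)

/-- The factor `cτ + d`. -/
def den (γ : Matrix (Fin 4) (Fin 4) ℤ) (τ : Fin 2 → Fin 2 → ℂ) : Matrix (Fin 2) (Fin 2) ℂ :=
  blk γ 1 0 * Matrix.of τ + blk γ 1 1

/-- The action `γ·τ = (aτ+b)(cτ+d)⁻¹` of `Sp(4)` on the Siegel upper half space. -/
def moeb (γ : Matrix (Fin 4) (Fin 4) ℤ) (τ : Fin 2 → Fin 2 → ℂ) : Fin 2 → Fin 2 → ℂ :=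
  fun i j => ((blk γ 0 0 * Matrix.of τ + blk γ 0 1) * (den γ τ)⁻¹) i j

/-- Matrix coefficients of the `j`-th symmetric power of the standard representation of
`GL(2,ℂ)`, in the basis `x₁^(j-i) x₂^i`. -/
def symCoeff (j : ℕ) (m : Matrix (Fin 2) (Fin 2) ℂ) (l i : Fin (j + 1)) : ℂ :=
  (((Polynomial.C (m 0 0) + Polynomial.C (m 1 0) * Polynomial.X) ^ (j - (l : ℕ)) *
    (Polynomial.C (m 0 1) + Polynomial.C (m 1 1) * Polynomial.X) ^ (l : ℕ)).coeff i)

/-- The `j`-th symmetric power `Sym^j(m)` acting on coordinate vectors. -/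
def symAct (j : ℕ) (m : Matrix (Fin 2) (Fin 2) ℂ) (v : Fin (j + 1) → ℂ) : Fin (j + 1) → ℂ :=
  fun i => ∑ l, symCoeff j m l i * v l

lemma symAct_add (j : ℕ) (m : Matrix (Fin 2) (Fin 2) ℂ) (v w : Fin (j + 1) → ℂ) :
    symAct j m (v + w) = symAct j m v + symAct j m w := by
  funext i
  simp [symAct, mul_add, Finset.sum_add_distrib]

lemma symAct_smul (j : ℕ) (m : Matrix (Fin 2) (Fin 2) ℂ) (a : ℂ) (v : Fin (j + 1) → ℂ) :
    symAct j m (a • v) = a • symAct j m v := by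
  funext i
  simp only [symAct, Pi.smul_apply, smul_eq_mul, Finset.mul_sum]
  exact Finset.sum_congr rfl fun l _ => by ring

lemma symAct_zero (j : ℕ) (m : Matrix (Fin 2) (Fin 2) ℂ) : symAct j m 0 = 0 := by
  funext i; simp [symAct]

/-- The weight `(j,k)` automorphy action `Sym^j(m) ⊗ det(m)^k`. -/
def wt (j : ℕ) (k : ℤ) (m : Matrix (Fin 2) (Fin 2) ℂ) (v : Fin (j + 1) → ℂ) :
    Fin (j + 1) → ℂ :=
  (m.det ^ k) • symAct j m v

lemma wt_add (j : ℕ) (k : ℤ) (m : Matrix (Fin 2) (Fin 2) ℂ) (v w : Fin (j + 1) → ℂ) :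
    wt j k m (v + w) = wt j k m v + wt j k m w := by
  simp [wt, symAct_add, smul_add]

lemma wt_smul (j : ℕ) (k : ℤ) (m : Matrix (Fin 2) (Fin 2) ℂ) (a : ℂ) (v : Fin (j + 1) → ℂ) :
    wt j k m (a • v) = a • wt j k m v := by
  rw [wt, wt, symAct_smul, smul_comm]

lemma wt_zero (j : ℕ) (k : ℤ) (m : Matrix (Fin 2) (Fin 2) ℂ) : wt j k m 0 = 0 := by
  simp [wt, symAct_zero]

/-- The slash operation `(F|γ)(τ) = Sym^j(cτ+d)⁻¹ det(cτ+d)⁻ᵏ F(γ·τ)`. -/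
def slashS (j : ℕ) (k : ℤ) (γ : Matrix (Fin 4) (Fin 4) ℤ)
    (F : (Fin 2 → Fin 2 → ℂ) → (Fin (j + 1) → ℂ)) (τ : Fin 2 → Fin 2 → ℂ) :
    Fin (j + 1) → ℂ :=
  ((den γ τ).det ^ (-k)) • symAct j ((den γ τ)⁻¹) (F (moeb γ τ))

lemma slashS_add (j : ℕ) (k : ℤ) (γ : Matrix (Fin 4) (Fin 4) ℤ)
    (F G : (Fin 2 → Fin 2 → ℂ) → (Fin (j + 1) → ℂ)) (τ : Fin 2 → Fin 2 → ℂ) :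
    slashS j k γ (F + G) τ = slashS j k γ F τ + slashS j k γ G τ := by
  simp [slashS, symAct_add, smul_add]

lemma slashS_smul (j : ℕ) (k : ℤ) (γ : Matrix (Fin 4) (Fin 4) ℤ) (a : ℂ)
    (F : (Fin 2 → Fin 2 → ℂ) → (Fin (j + 1) → ℂ)) (τ : Fin 2 → Fin 2 → ℂ) :
    slashS j k γ (a • F) τ = a • slashS j k γ F τ := by
  simp only [slashS, Pi.smul_apply, symAct_smul]
  rw [smul_comm]

lemma slashS_zero (j : ℕ) (k : ℤ) (γ : Matrix (Fin 4) (Fin 4) ℤ) (τ : Fin 2 → Fin 2 → ℂ) :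
    slashS j k γ (0 : (Fin 2 → Fin 2 → ℂ) → (Fin (j + 1) → ℂ)) τ = 0 := by
  simp [slashS, symAct_zero]

/-- The diagonal point `diag(τ₁,τ₂)` of the Siegel upper half space. -/
def diagH (τ₁ τ₂ : ℂ) : Fin 2 → Fin 2 → ℂ :=
  fun i j => if i = j then (if i = 0 then τ₁ else τ₂) else 0

/-- `F` is a Siegel cusp form of degree 2 and weight `(j,k)` on `Γ`, with character `χ`:
holomorphic on `ℍ₂`, transforming by `F(γ·τ) = χ(γ) Sym^j(cτ+d) det(cτ+d)^k F(τ)` for `γ ∈ Γ`,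
with `(F|γ)(diag(τ₁,it)) → 0` as `t → ∞` for every `γ ∈ Γ₂`, and (normalization) vanishing
off `ℍ₂`. -/
def IsSiegelCuspForm (j : ℕ) (k : ℤ) (Γ : Set (Matrix (Fin 4) (Fin 4) ℤ))
    (χ : Matrix (Fin 4) (Fin 4) ℤ → ℂ)
    (F : (Fin 2 → Fin 2 → ℂ) → (Fin (j + 1) → ℂ)) : Prop :=
  DifferentiableOn ℂ F H2 ∧
  (∀ γ ∈ Γ, ∀ τ ∈ H2, F (moeb γ τ) = χ γ • wt j k (den γ τ) (F τ)) ∧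
  (∀ γ ∈ Sp4Z, ∀ τ₁ : ℂ, 0 < τ₁.im →
    Tendsto (fun t : ℝ => slashS j k γ F (diagH τ₁ (t * Complex.I))) atTop (𝓝 0)) ∧
  (∀ τ, τ ∉ H2 → F τ = 0)

/-- The space `S_{j,k}(Γ, χ)` of Siegel cusp forms of degree 2 and weight `(j,k)` on `Γ`
with character `χ`, as a complex vector space. -/
def SiegelCusp (j : ℕ) (k : ℤ) (Γ : Set (Matrix (Fin 4) (Fin 4) ℤ))
    (χ : Matrix (Fin 4) (Fin 4) ℤ → ℂ) :
    Submodule ℂ ((Fin 2 → Fin 2 → ℂ) → (Fin (j + 1) → ℂ)) where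
  carrier := {F | IsSiegelCuspForm j k Γ χ F}
  add_mem' := by
    rintro F G hF hG
    refine ⟨hF.1.add hG.1, ?_, ?_, ?_⟩
    · intro γ hγ τ hτ
      show F (moeb γ τ) + G (moeb γ τ) = χ γ • wt j k (den γ τ) (F τ + G τ)
      rw [wt_add, smul_add, hF.2.1 γ hγ τ hτ, hG.2.1 γ hγ τ hτ]
    · intro γ hγ τ₁ hτ
      have h := (hF.2.2.1 γ hγ τ₁ hτ).add (hG.2.2.1 γ hγ τ₁ hτ)
      rw [add_zero] at h
      exact h.congr fun t => (slashS_add j k γ F G _).symm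
    · intro τ hτ
      show F τ + G τ = 0
      rw [hF.2.2.2 τ hτ, hG.2.2.2 τ hτ, add_zero]
  zero_mem' := by
    refine ⟨?_, ?_, ?_, ?_⟩
    · exact differentiableOn_const 0
    · intro γ hγ τ hτ
      show (0 : Fin (j + 1) → ℂ) = χ γ • wt j k (den γ τ) 0
      rw [wt_zero, smul_zero]
    · intro γ hγ τ₁ hτ
      have : (fun t : ℝ => slashS j k γ (0 : (Fin 2 → Fin 2 → ℂ) → (Fin (j + 1) → ℂ))
          (diagH τ₁ (t * Complex.I))) = fun _ => 0 := by
        funext t; exact slashS_zero j k γ _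
      rw [this]
      exact tendsto_const_nhds
    · intro τ _; rfl
  smul_mem' := by
    rintro a F hF
    refine ⟨hF.1.const_smul a, ?_, ?_, ?_⟩
    · intro γ hγ τ hτ
      show a • F (moeb γ τ) = χ γ • wt j k (den γ τ) (a • F τ)
      rw [hF.2.1 γ hγ τ hτ, wt_smul, smul_comm]
    · intro γ hγ τ₁ hτ
      have h := (hF.2.2.1 γ hγ τ₁ hτ).const_smul a
      rw [smul_zero] at h
      exact h.congr fun t => (slashS_smul j k γ a F _).symm
    · intro τ hτ
      show a • F τ = 0
      rw [hF.2.2.2 τ hτ, smul_zero]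

/-- `ε` is (on `Γ₂`) the unique nontrivial homomorphism `Γ₂ → {±1}`. -/
def IsEps (ε : Matrix (Fin 4) (Fin 4) ℤ → ℂ) : Prop :=
  (∀ γ ∈ Sp4Z, ε γ = 1 ∨ ε γ = -1) ∧
  (∀ γ ∈ Sp4Z, ∀ δ ∈ Sp4Z, ε (γ * δ) = ε γ * ε δ) ∧
  (∃ γ ∈ Sp4Z, ε γ ≠ 1)

/-- `h` is a cusp form of weight `k` on `SL(2,ℤ)`: a holomorphic function on the upper half
plane with `h((az+b)/(cz+d)) = (cz+d)^k h(z)` for all of `SL(2,ℤ)` and `h(it) → 0` as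
`t → +∞`. -/
def IsCuspFormSL2 (k : ℤ) (h : ℂ → ℂ) : Prop :=
  DifferentiableOn ℂ h {z : ℂ | 0 < z.im} ∧
  (∀ a b c d : ℤ, a * d - b * c = 1 → ∀ z : ℂ, 0 < z.im →
    h (((a : ℂ) * z + (b : ℂ)) / ((c : ℂ) * z + (d : ℂ))) = ((c : ℂ) * z + (d : ℂ)) ^ k * h z) ∧
  Filter.Tendsto (fun t : ℝ => h (t * Complex.I)) Filter.atTop (nhds 0)

lemma aux_diagH_mem (z₁ z₂ : ℂ) (h₁ : 0 < z₁.im) (h₂ : 0 < z₂.im) : diagH z₁ z₂ ∈ H2 := by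
  constructor
  · ext i j
    fin_cases i <;> fin_cases j <;> simp [diagH]
  · have : (Matrix.of fun i j => (diagH z₁ z₂ i j).im) = Matrix.diagonal ![z₁.im, z₂.im] := by
      ext i j
      fin_cases i <;> fin_cases j <;> simp [diagH]
    rw [this, Matrix.posDef_diagonal_iff]
    intro i
    fin_cases i <;> simpa

def auxG (a b c d a' b' c' d' : ℤ) : Matrix (Fin 4) (Fin 4) ℤ :=
  !![a, 0, b, 0; 0, a', 0, b'; c, 0, d, 0; 0, c', 0, d']

lemma auxG_mem (a b c d a' b' c' d' : ℤ) (h : a * d - b * c = 1) (h' : a' * d' - b' * c' = 1) :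
    auxG a b c d a' b' c' d' ∈ Sp4Z := by
  show _ = _
  ext i j
  fin_cases i <;> fin_cases j <;>
    simp [auxG, J4, Matrix.mul_apply, Fin.sum_univ_four] <;> linarith

lemma aux_den (a b c d a' b' c' d' : ℤ) (z w : ℂ) :
    den (auxG a b c d a' b' c' d') (diagH z w) = Matrix.diagonal ![c * z + d, c' * w + d'] := by
  ext i j
  fin_cases i <;> fin_cases j <;>
    simp [auxG, den, blk, diagH, Matrix.mul_apply, Fin.sum_univ_two]

lemma aux_ne (a b c d : ℤ) (h : a * d - b * c = 1) (z : ℂ) (hz : 0 < z.im) :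
    (c : ℂ) * z + d ≠ 0 := by
  intro h0
  have him := congrArg Complex.im h0
  have hre := congrArg Complex.re h0
  simp at him hre
  rcases him with h1 | h1
  · subst h1
    simp at hre
    subst hre
    simp at h
  · exact hz.ne' h1

lemma aux_moeb (a b c d a' b' c' d' : ℤ) (z w : ℂ) (h1 : (c : ℂ) * z + d ≠ 0)
    (h2 : (c' : ℂ) * w + d' ≠ 0) :
    moeb (auxG a b c d a' b' c' d') (diagH z w) =
      diagH ((a * z + b) / (c * z + d)) ((a' * w + b') / (c' * w + d')) := by
  have hinv : (Matrix.diagonal ![(c : ℂ) * z + d, (c' : ℂ) * w + d'])⁻¹ =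
      Matrix.diagonal ![((c : ℂ) * z + d)⁻¹, ((c' : ℂ) * w + d')⁻¹] := by
    apply Matrix.inv_eq_left_inv
    rw [Matrix.diagonal_mul_diagonal, ← Matrix.diagonal_one]
    congr 1
    ext i
    fin_cases i <;> simp [h1, h2]
  funext i j
  unfold moeb
  rw [aux_den, hinv]
  fin_cases i <;> fin_cases j <;>
    simp [auxG, blk, diagH, Matrix.mul_apply, Fin.sum_univ_two, div_eq_mul_inv]

lemma aux_symAct_diag (j : ℕ) (p q : ℂ) (v : Fin (j + 1) → ℂ) (l : Fin (j + 1)) :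
    symAct j (Matrix.diagonal ![p, q]) v l = p ^ (j - (l : ℕ)) * q ^ (l : ℕ) * v l := by
  unfold symAct
  rw [Finset.sum_eq_single l]
  · congr 1
    simp [symCoeff, mul_pow, ← Polynomial.C_pow, -map_pow, Polynomial.coeff_C_mul, Polynomial.coeff_X_pow]
  · intro b _ hb
    have : (l : ℕ) ≠ b := fun h => hb (Fin.ext h.symm)
    simp [symCoeff, mul_pow, ← Polynomial.C_pow, -map_pow, Polynomial.coeff_C_mul, Polynomial.coeff_X_pow, this]
  · simp

lemma aux_transf (j : ℕ) (k : ℤ) (F : (Fin 2 → Fin 2 → ℂ) → (Fin (j + 1) → ℂ))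
    (hF : F ∈ SiegelCusp j k Sp4Z (fun _ => 1)) (l : Fin (j + 1))
    (a b c d a' b' c' d' : ℤ) (h : a * d - b * c = 1) (h' : a' * d' - b' * c' = 1)
    (z w : ℂ) (hz : 0 < z.im) (hw : 0 < w.im) :
    F (diagH ((a * z + b) / (c * z + d)) ((a' * w + b') / (c' * w + d'))) l =
      ((c * z + d) * (c' * w + d')) ^ k *
        ((c * z + d) ^ (j - (l : ℕ)) * (c' * w + d') ^ (l : ℕ) * F (diagH z w) l) := by
  have key := hF.2.1 _ (auxG_mem a b c d a' b' c' d' h h') _ (aux_diagH_mem z w hz hw)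
  rw [aux_moeb _ _ _ _ _ _ _ _ _ _ (aux_ne a b c d h z hz) (aux_ne a' b' c' d' h' w hw),
    aux_den] at key
  rw [key]
  simp [wt, aux_symAct_diag, Matrix.det_diagonal]

def auxS : Matrix (Fin 4) (Fin 4) ℤ :=
  !![0, 1, 0, 0; 1, 0, 0, 0; 0, 0, 0, 1; 0, 0, 1, 0]

lemma auxS_mem : auxS ∈ Sp4Z := by
  show _ = _
  unfold auxS J4
  decide

lemma auxS_den (z w : ℂ) : den auxS (diagH z w) = !![0, 1; 1, 0] := by
  ext i j
  fin_cases i <;> fin_cases j <;>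
    simp [auxS, den, blk, diagH, Matrix.mul_apply, Fin.sum_univ_two]

lemma auxS_moeb (z w : ℂ) : moeb auxS (diagH z w) = diagH w z := by
  have hinv : (!![0, 1; 1, 0] : Matrix (Fin 2) (Fin 2) ℂ)⁻¹ = !![0, 1; 1, 0] := by
    apply Matrix.inv_eq_left_inv
    ext i j
    fin_cases i <;> fin_cases j <;> simp
  funext i j
  unfold moeb
  rw [auxS_den, hinv]
  fin_cases i <;> fin_cases j <;>
    simp [auxS, blk, diagH, Matrix.mul_apply, Fin.sum_univ_two]

lemma aux_symAct_swap (j : ℕ) (v : Fin (j + 1) → ℂ) (l m : Fin (j + 1)) (hm : (m : ℕ) = j - l) :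
    symAct j !![0, 1; 1, 0] v l = v m := by
  unfold symAct
  have hl := l.isLt
  rw [Finset.sum_eq_single m]
  · have : (l : ℕ) = j - m := by omega
    simp [symCoeff, Polynomial.coeff_X_pow, ← this]
  · intro b _ hb
    have hbl := b.isLt
    have : (l : ℕ) ≠ j - b := by
      intro h
      apply hb
      apply Fin.ext
      show (b : ℕ) = m
      omega
    simp [symCoeff, Polynomial.coeff_X_pow, this]
  · simp

lemma aux_swap (j : ℕ) (k : ℤ) (F : (Fin 2 → Fin 2 → ℂ) → (Fin (j + 1) → ℂ))
    (hF : F ∈ SiegelCusp j k Sp4Z (fun _ => 1)) (l m : Fin (j + 1)) (hm : (m : ℕ) = j - l)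
    (z w : ℂ) (hz : 0 < z.im) (hw : 0 < w.im) :
    F (diagH w z) l = (-1 : ℂ) ^ k * F (diagH z w) m := by
  have key := hF.2.1 _ auxS_mem _ (aux_diagH_mem z w hz hw)
  rw [auxS_moeb, auxS_den] at key
  rw [key]
  simp [wt, aux_symAct_swap j _ l m hm, Matrix.det_fin_two]

lemma aux_tendsto (j : ℕ) (k : ℤ) (F : (Fin 2 → Fin 2 → ℂ) → (Fin (j + 1) → ℂ))
    (hF : F ∈ SiegelCusp j k Sp4Z (fun _ => 1)) (l : Fin (j + 1))
    (z : ℂ) (hz : 0 < z.im) :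
    Tendsto (fun t : ℝ => F (diagH z (t * Complex.I)) l) atTop (𝓝 0) := by
  have key := hF.2.2.1 _ (auxG_mem 1 0 0 1 1 0 0 1 (by norm_num) (by norm_num)) z hz
  have k2 := (tendsto_pi_nhds.1 key) l
  refine k2.congr fun t => ?_
  unfold slashS
  rw [aux_moeb _ _ _ _ _ _ _ _ _ _ (by simp) (by simp), aux_den]
  have : (Matrix.diagonal ![((0 : ℤ) : ℂ) * z + ((1 : ℤ) : ℂ),
      ((0 : ℤ) : ℂ) * (t * Complex.I) + ((1 : ℤ) : ℂ)])⁻¹ = Matrix.diagonal ![1, 1] := by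
    apply Matrix.inv_eq_left_inv
    rw [Matrix.diagonal_mul_diagonal, ← Matrix.diagonal_one]
    congr 1
    ext i
    fin_cases i <;> simp
  rw [this]
  simp [aux_symAct_diag, Matrix.det_diagonal]

/-- Restriction of a Siegel cusp form of weight `(j,k)` on `Γ₂` to the diagonal: writing
`F = (F_0,…,F_j)ᵗ` and `g_l(z₁,z₂) = F_l(diag(z₁,z₂))`, (i) `z₁ ↦ g_l(z₁,z₂)` is a cusp form
of weight `j+k-l` on `SL(2,ℤ)` for fixed `z₂ ∈ ℍ₁`; (ii) `z₂ ↦ g_l(z₁,z₂)` is a cusp form of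
weight `k+l` on `SL(2,ℤ)` for fixed `z₁ ∈ ℍ₁`; (iii) `g_l(z₂,z₁) = (−1)^k g_{j−l}(z₁,z₂)`. -/
theorem restriction_to_diagonal (j : ℕ) (k : ℤ)
    (F : (Fin 2 → Fin 2 → ℂ) → (Fin (j + 1) → ℂ))
    (hF : F ∈ SiegelCusp j k Sp4Z (fun _ => 1)) (l : Fin (j + 1)) :
    (∀ z₂ : ℂ, 0 < z₂.im →
      IsCuspFormSL2 ((j : ℤ) + k - (l : ℕ)) (fun z₁ => F (diagH z₁ z₂) l)) ∧
    (∀ z₁ : ℂ, 0 < z₁.im →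
      IsCuspFormSL2 (k + (l : ℕ)) (fun z₂ => F (diagH z₁ z₂) l)) ∧
    (∀ z₁ z₂ : ℂ, 0 < z₁.im → 0 < z₂.im →
      F (diagH z₂ z₁) l = (-1 : ℂ) ^ k * F (diagH z₁ z₂) ⟨j - (l : ℕ), by omega⟩) := by
  have hd : ∀ z w : ℂ, 0 < z.im → 0 < w.im → DifferentiableWithinAt ℂ (fun τ => F τ l) H2
      (diagH z w) := fun z w hz hw =>
    (differentiableWithinAt_pi.1 (hF.1 _ (aux_diagH_mem z w hz hw))) l
  refine ⟨fun w hw => ⟨?_, ?_, ?_⟩, fun w hw => ⟨?_, ?_, ?_⟩, ?_⟩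
  · intro z hz
    refine (hd z w hz hw).comp z (f := fun z => diagH z w) ?_ fun x hx => aux_diagH_mem x w hx hw
    apply DifferentiableAt.differentiableWithinAt
    refine differentiableAt_pi.2 fun i => differentiableAt_pi.2 fun i' => ?_
    fin_cases i <;> fin_cases i' <;> simp [diagH]
  · intro a b c d h z hz
    have := aux_transf j k F hF l a b c d 1 0 0 1 h (by norm_num) z w hz hw
    simp only [Int.cast_one, Int.cast_zero, one_mul, zero_mul, zero_add, add_zero, div_one,
      mul_one, one_pow] at this
    simp only [this]
    rw [← mul_assoc, ← zpow_natCast, ← zpow_add₀ (aux_ne a b c d h z hz)]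
    congr 2
    have := l.isLt
    omega
  · have := (aux_tendsto j k F hF ⟨j - (l : ℕ), by omega⟩ w hw).const_mul ((-1 : ℂ) ^ k)
    rw [mul_zero] at this
    refine this.congr' ?_
    filter_upwards [eventually_gt_atTop 0] with t ht
    exact (aux_swap j k F hF l _ rfl w (t * Complex.I) hw (by simpa using ht)).symm
  · intro z hz
    refine (hd w z hw hz).comp z (f := fun z => diagH w z) ?_ fun x hx => aux_diagH_mem w x hw hx
    apply DifferentiableAt.differentiableWithinAt
    refine differentiableAt_pi.2 fun i => differentiableAt_pi.2 fun i' => ?_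
    fin_cases i <;> fin_cases i' <;> simp [diagH]
  · intro a b c d h z hz
    have := aux_transf j k F hF l 1 0 0 1 a b c d (by norm_num) h w z hw hz
    simp only [Int.cast_one, Int.cast_zero, one_mul, zero_mul, zero_add, add_zero, div_one,
      one_pow] at this
    simp only [this]
    rw [← mul_assoc, ← zpow_natCast, ← zpow_add₀ (aux_ne a b c d h z hz)]
  · exact aux_tendsto j k F hF l w hw
  · intro z w hz hw
    exact aux_swap j k F hF l _ rfl z w hz hw
end
end

section
/- Let j ≥ 0 and k ∈ {1,2}. If the space S_{j,k}(Γ₂[2]) of Siegel cusp forms of degree 2 and weight (j,k) on the principal congruence subgroup Γ₂[2] of level 2 is nonzero, then the space S_{2j,2k}(Γ₂) of Siegel cusp forms of weight (2j,2k) on Γ₂ = Sp(4,ℤ) is nonzero. -/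
noncomputable section

open Matrix Complex Filter Topology

/-- Homogeneous polynomial attached to a coordinate vector. -/
def PV (j : ℕ) (v : Fin (j + 1) → ℂ) (x y : ℂ) : ℂ :=
  ∑ l : Fin (j + 1), v l * (x ^ (j - (l : ℕ)) * y ^ (l : ℕ))

lemma PV_inj_real (j : ℕ) (v : Fin (j + 1) → ℂ) (h : ∀ y : ℝ, PV j v 1 (y : ℂ) = 0) : v = 0 := by
  let p : Polynomial ℂ := ∑ l : Fin (j + 1), Polynomial.C (v l) * Polynomial.X ^ (l : ℕ)
  have hp : p = 0 := by
    refine Polynomial.eq_zero_of_infinite_isRoot p ?_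
    refine Set.Infinite.mono (s := Set.range (fun y : ℝ => (y : ℂ))) ?_ ?_
    · rintro _ ⟨y, rfl⟩
      have := h y
      simp only [PV, one_pow, one_mul] at this
      simpa [p, Polynomial.IsRoot.def, Polynomial.eval_finsetSum] using this
    · exact Set.infinite_range_of_injective Complex.ofReal_injective
  funext i
  have := congrArg (fun q => Polynomial.coeff q (i : ℕ)) hp
  simp only [p, Polynomial.finsetSum_coeff, Polynomial.coeff_C_mul, Polynomial.coeff_X_pow,
    Polynomial.coeff_zero] at this
  rw [Finset.sum_eq_single i] at this
  · simpa using this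
  · intro b _ hb
    rw [if_neg, mul_zero]
    intro h; exact hb (Fin.ext h.symm)
  · simp

lemma PV_sub (j : ℕ) (v w : Fin (j + 1) → ℂ) (x y : ℂ) :
    PV j (v - w) x y = PV j v x y - PV j w x y := by
  simp [PV, sub_mul, Finset.sum_sub_distrib]

lemma PV_inj (j : ℕ) (v w : Fin (j + 1) → ℂ) (h : ∀ x y : ℂ, PV j v x y = PV j w x y) : v = w := by
  have := PV_inj_real j (v - w) (fun y => by rw [PV_sub, h, sub_self])
  exact sub_eq_zero.1 this

lemma homog_sum (j : ℕ) (p : Polynomial ℂ) (hp : p.natDegree ≤ j) (x y : ℂ) (hx : x ≠ 0) :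
    ∑ i : Fin (j + 1), p.coeff i * (x ^ (j - (i : ℕ)) * y ^ (i : ℕ)) = x ^ j * p.eval (y / x) := by
  rw [Polynomial.eval_eq_sum_range' (Nat.lt_succ_of_le hp), Finset.mul_sum, Finset.sum_range]
  refine Finset.sum_congr rfl fun i _ => ?_
  have : x ^ j = x ^ (j - (i : ℕ)) * x ^ (i : ℕ) := by
    rw [← pow_add, Nat.sub_add_cancel (Nat.le_of_lt_succ i.2)]
  rw [this, div_pow]
  field_simp

lemma symCoeff_sum (j : ℕ) (m : Matrix (Fin 2) (Fin 2) ℂ) (l : Fin (j + 1)) (x y : ℂ) :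
    ∑ i : Fin (j + 1), symCoeff j m l i * (x ^ (j - (i : ℕ)) * y ^ (i : ℕ)) =
      (m 0 0 * x + m 1 0 * y) ^ (j - (l : ℕ)) * (m 0 1 * x + m 1 1 * y) ^ (l : ℕ) := by
  have key : ∀ x : ℂ, x ∈ ({0}ᶜ : Set ℂ) →
      ∑ i : Fin (j + 1), symCoeff j m l i * (x ^ (j - (i : ℕ)) * y ^ (i : ℕ)) =
      (m 0 0 * x + m 1 0 * y) ^ (j - (l : ℕ)) * (m 0 1 * x + m 1 1 * y) ^ (l : ℕ) := by
    intro x hx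
    have hx : x ≠ 0 := hx
    have hdeg : ∀ a b : ℂ, (Polynomial.C a + Polynomial.C b * Polynomial.X).natDegree ≤ 1 := by
      intro a b; compute_degree
    unfold symCoeff
    rw [homog_sum j _ _ x y hx]
    · have : x ^ j = x ^ (j - (l : ℕ)) * x ^ (l : ℕ) := by
        rw [← pow_add, Nat.sub_add_cancel (Nat.le_of_lt_succ l.2)]
      simp only [Polynomial.eval_mul, Polynomial.eval_pow, Polynomial.eval_add, Polynomial.eval_C,
        Polynomial.eval_X]
      rw [this, mul_mul_mul_comm, ← mul_pow, ← mul_pow]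
      congr 2 <;> field_simp
    · refine (Polynomial.natDegree_mul_le).trans ?_
      have h1 := Polynomial.natDegree_pow_le_of_le (j - (l : ℕ)) (hdeg (m 0 0) (m 1 0))
      have h2 := Polynomial.natDegree_pow_le_of_le (l : ℕ) (hdeg (m 0 1) (m 1 1))
      have := l.2
      omega
  have h := Continuous.ext_on (dense_compl_singleton (0 : ℂ)) (f := fun x =>
      ∑ i : Fin (j + 1), symCoeff j m l i * (x ^ (j - (i : ℕ)) * y ^ (i : ℕ)))
      (g := fun x => (m 0 0 * x + m 1 0 * y) ^ (j - (l : ℕ)) * (m 0 1 * x + m 1 1 * y) ^ (l : ℕ))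
      (by fun_prop) (by fun_prop) key
  exact congrFun h x

lemma PV_symAct (j : ℕ) (m : Matrix (Fin 2) (Fin 2) ℂ) (v : Fin (j + 1) → ℂ) (x y : ℂ) :
    PV j (symAct j m v) x y = PV j v (m 0 0 * x + m 1 0 * y) (m 0 1 * x + m 1 1 * y) := by
  simp only [PV, symAct, Finset.sum_mul]
  rw [Finset.sum_comm]
  refine Finset.sum_congr rfl fun l _ => ?_
  rw [← symCoeff_sum, Finset.mul_sum]
  exact Finset.sum_congr rfl fun i _ => by ring

lemma symAct_mul (j : ℕ) (m n : Matrix (Fin 2) (Fin 2) ℂ) (v : Fin (j + 1) → ℂ) :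
    symAct j (m * n) v = symAct j m (symAct j n v) := by
  refine PV_inj _ _ _ fun x y => ?_
  simp only [PV_symAct, Matrix.mul_apply, Fin.sum_univ_two]
  congr 1 <;> ring

lemma symAct_one (j : ℕ) (v : Fin (j + 1) → ℂ) : symAct j 1 v = v := by
  refine PV_inj _ _ _ fun x y => ?_
  simp [PV_symAct]

/-- Product `Sym^j × Sym^j → Sym^{2j}`. -/
def mulS (j : ℕ) (v w : Fin (j + 1) → ℂ) : Fin (2 * j + 1) → ℂ :=
  fun i => ∑ l : Fin (j + 1), ∑ m : Fin (j + 1), if (l : ℕ) + (m : ℕ) = (i : ℕ) then v l * w m else 0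

lemma PV_mulS (j : ℕ) (v w : Fin (j + 1) → ℂ) (x y : ℂ) :
    PV (2 * j) (mulS j v w) x y = PV j v x y * PV j w x y := by
  simp only [PV, mulS, Finset.sum_mul]
  rw [Finset.sum_comm]
  refine Finset.sum_congr rfl fun l _ => ?_
  rw [Finset.sum_comm, Finset.mul_sum]
  refine Finset.sum_congr rfl fun m _ => ?_
  have hl := l.2
  have hm := m.2
  rw [Finset.sum_eq_single (⟨(l : ℕ) + m, by omega⟩ : Fin (2 * j + 1))]
  · rw [if_pos rfl]
    have : 2 * j - ((l : ℕ) + m) = (j - l) + (j - m) := by omega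
    simp only [this, pow_add]; ring
  · intro b _ hb
    rw [if_neg, zero_mul]
    intro h; exact hb (Fin.ext h.symm)
  · simp

lemma symAct_mulS (j : ℕ) (m : Matrix (Fin 2) (Fin 2) ℂ) (v w : Fin (j + 1) → ℂ) :
    symAct (2 * j) m (mulS j v w) = mulS j (symAct j m v) (symAct j m w) := by
  refine PV_inj _ _ _ fun x y => ?_
  simp only [PV_symAct, PV_mulS]

lemma mulS_smul (j : ℕ) (a b : ℂ) (v w : Fin (j + 1) → ℂ) :
    mulS j (a • v) (b • w) = (a * b) • mulS j v w := by
  funext i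
  simp only [mulS, Pi.smul_apply, smul_eq_mul, Finset.mul_sum, mul_ite, mul_zero]
  refine Finset.sum_congr rfl fun l _ => Finset.sum_congr rfl fun m _ => ?_
  congr 1; ring

lemma mulS_zero (j : ℕ) : mulS j 0 0 = 0 := by
  funext i; simp [mulS]

lemma continuous_mulS (j : ℕ) :
    Continuous (fun p : (Fin (j + 1) → ℂ) × (Fin (j + 1) → ℂ) => mulS j p.1 p.2) := by
  unfold mulS
  refine continuous_pi fun i => continuous_finsetSum _ fun l _ => continuous_finsetSum _ fun m _ => ?_
  split_ifs <;> fun_prop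

lemma symAct_sum (j : ℕ) (m : Matrix (Fin 2) (Fin 2) ℂ) {ι : Type*} (s : Finset ι)
    (f : ι → Fin (j + 1) → ℂ) :
    symAct j m (∑ r ∈ s, f r) = ∑ r ∈ s, symAct j m (f r) := by
  classical
  induction s using Finset.induction_on with
  | empty => simp [symAct_zero]
  | insert a s ha ih => rw [Finset.sum_insert ha, Finset.sum_insert ha, symAct_add, ih]

/-- coordinatewise conjugation -/
def cv {j : ℕ} (v : Fin (j + 1) → ℂ) : Fin (j + 1) → ℂ := fun i => star (v i)

lemma PV_cv (j : ℕ) (v : Fin (j + 1) → ℂ) (x y : ℂ) :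
    PV j (cv v) x y = star (PV j v (star x) (star y)) := by
  simp [PV, cv]

lemma symAct_cv (j : ℕ) (m : Matrix (Fin 2) (Fin 2) ℂ) (v : Fin (j + 1) → ℂ) :
    symAct j (m.map star) (cv v) = cv (symAct j m v) := by
  refine PV_inj _ _ _ fun x y => ?_
  simp [PV_symAct, PV_cv]

lemma cv_smul (j : ℕ) (a : ℂ) (v : Fin (j + 1) → ℂ) : cv (a • v) = star a • cv v := by
  funext i; simp [cv]
lemma J4_sq : J4 * J4 = -1 := by unfold J4; decide

lemma Sp4Z_mul {γ δ : Matrix (Fin 4) (Fin 4) ℤ} (hγ : γ ∈ Sp4Z) (hδ : δ ∈ Sp4Z) : γ * δ ∈ Sp4Z := by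
  have hγ : γᵀ * J4 * γ = J4 := hγ
  have hδ : δᵀ * J4 * δ = J4 := hδ
  show (γ * δ)ᵀ * J4 * (γ * δ) = J4
  calc (γ * δ)ᵀ * J4 * (γ * δ) = δᵀ * (γᵀ * J4 * γ) * δ := by
        rw [transpose_mul]; simp only [Matrix.mul_assoc]
    _ = J4 := by rw [hγ, hδ]

/-- symplectic inverse -/
def sinv (γ : Matrix (Fin 4) (Fin 4) ℤ) : Matrix (Fin 4) (Fin 4) ℤ := -(J4 * γᵀ * J4)

lemma sinv_mul {γ : Matrix (Fin 4) (Fin 4) ℤ} (hγ : γ ∈ Sp4Z) : sinv γ * γ = 1 := by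
  have hγ : γᵀ * J4 * γ = J4 := hγ
  calc sinv γ * γ = -(J4 * (γᵀ * J4 * γ)) := by
        unfold sinv; simp only [Matrix.mul_assoc, Matrix.neg_mul]
    _ = 1 := by rw [hγ, J4_sq, neg_neg]

lemma mul_sinv {γ : Matrix (Fin 4) (Fin 4) ℤ} (hγ : γ ∈ Sp4Z) : γ * sinv γ = 1 :=
  mul_eq_one_comm.1 (sinv_mul hγ)

lemma sinv_mem {γ : Matrix (Fin 4) (Fin 4) ℤ} (hγ : γ ∈ Sp4Z) : sinv γ ∈ Sp4Z := by
  have h : γᵀ * J4 * γ = J4 := hγ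
  show (sinv γ)ᵀ * J4 * sinv γ = J4
  calc (sinv γ)ᵀ * J4 * sinv γ = (sinv γ)ᵀ * (γᵀ * J4 * γ) * sinv γ := by rw [h]
    _ = (γ * sinv γ)ᵀ * J4 * (γ * sinv γ) := by
        rw [transpose_mul]; simp only [Matrix.mul_assoc]
    _ = J4 := by rw [mul_sinv hγ]; simp

/-- reduction mod 2 -/
def red (γ : Matrix (Fin 4) (Fin 4) ℤ) : Matrix (Fin 4) (Fin 4) (ZMod 2) :=
  (Int.castRingHom (ZMod 2)).mapMatrix γ

lemma red_mul (γ δ : Matrix (Fin 4) (Fin 4) ℤ) : red (γ * δ) = red γ * red δ := map_mul _ _ _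
lemma red_one : red 1 = 1 := map_one _

lemma mem_Sp4Z2 {γ : Matrix (Fin 4) (Fin 4) ℤ} (h : γ ∈ Sp4Z) (h2 : red γ = 1) : γ ∈ Sp4Z2 := by
  refine ⟨h, fun i j => ?_⟩
  have := congrFun (congrFun h2 i) j
  simpa [red, Matrix.one_apply] using this

/-- the conjugate by diag(1,1,-1,-1) -/
def E4 : Matrix (Fin 4) (Fin 4) ℤ := !![1,0,0,0; 0,1,0,0; 0,0,-1,0; 0,0,0,-1]
def pr (γ : Matrix (Fin 4) (Fin 4) ℤ) : Matrix (Fin 4) (Fin 4) ℤ := E4 * γ * E4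

lemma E4_J : E4 * J4 * E4 = -J4 := by unfold E4 J4; decide
lemma E4_T : E4ᵀ = E4 := by unfold E4; decide
lemma red_E4 : red E4 = 1 := by unfold E4 red; decide

lemma pr_mem {γ : Matrix (Fin 4) (Fin 4) ℤ} (hγ : γ ∈ Sp4Z) : pr γ ∈ Sp4Z := by
  have h : γᵀ * J4 * γ = J4 := hγ
  show (pr γ)ᵀ * J4 * pr γ = J4
  calc (pr γ)ᵀ * J4 * pr γ = E4 * γᵀ * (E4 * J4 * E4) * γ * E4 := by
        unfold pr; rw [transpose_mul, transpose_mul, E4_T]; simp only [Matrix.mul_assoc]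
    _ = -(E4 * (γᵀ * J4 * γ) * E4) := by
        rw [E4_J]; simp only [Matrix.mul_assoc, Matrix.mul_neg, Matrix.neg_mul]
    _ = J4 := by rw [h, E4_J, neg_neg]

lemma red_pr (γ : Matrix (Fin 4) (Fin 4) ℤ) : red (pr γ) = red γ := by
  unfold pr; rw [red_mul, red_mul, red_E4, one_mul, mul_one]

lemma blk_pr (γ : Matrix (Fin 4) (Fin 4) ℤ) :
    blk (pr γ) 0 0 = blk γ 0 0 ∧ blk (pr γ) 0 1 = - blk γ 0 1 ∧
    blk (pr γ) 1 0 = - blk γ 1 0 ∧ blk (pr γ) 1 1 = blk γ 1 1 := by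
  refine ⟨?_, ?_, ?_, ?_⟩ <;> ext i j <;> fin_cases i <;> fin_cases j <;>
    simp [blk, pr, E4, Matrix.mul_apply, Fin.sum_univ_four, Matrix.vecMul, dotProduct]

lemma blk_mul (γ δ : Matrix (Fin 4) (Fin 4) ℤ) (r s : Fin 2) :
    blk (γ * δ) r s = blk γ r 0 * blk δ 0 s + blk γ r 1 * blk δ 1 s := by
  ext i j
  simp [blk, Matrix.mul_apply, Fin.sum_univ_four, Fin.sum_univ_two]
  ring

lemma blk_rel {γ : Matrix (Fin 4) (Fin 4) ℤ} (hγ : γ ∈ Sp4Z) :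
    (blk γ 0 0)ᵀ * blk γ 1 0 = (blk γ 1 0)ᵀ * blk γ 0 0 ∧
    (blk γ 0 1)ᵀ * blk γ 1 1 = (blk γ 1 1)ᵀ * blk γ 0 1 ∧
    (blk γ 0 0)ᵀ * blk γ 1 1 = (blk γ 1 0)ᵀ * blk γ 0 1 + 1 := by
  have h : γᵀ * J4 * γ = J4 := hγ
  have e : ∀ i j, ((γ 0 i * γ 2 j + γ 1 i * γ 3 j - γ 2 i * γ 0 j - γ 3 i * γ 1 j : ℤ) : ℂ) =
      ((J4 i j : ℤ) : ℂ) := by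
    intro i j
    rw [← congrFun (congrFun h i) j]
    congr 1
    simp [Matrix.mul_apply, Fin.sum_univ_four, J4]
    ring
  push_cast at e
  refine ⟨?_, ?_, ?_⟩
  · ext i j
    have := e ⟨i, by omega⟩ ⟨j, by omega⟩
    fin_cases i <;> fin_cases j <;> simp [J4] at this <;>
      simp [blk, Matrix.mul_apply, Fin.sum_univ_two] <;> linear_combination this
  · ext i j
    have := e ⟨2 + i, by omega⟩ ⟨2 + j, by omega⟩
    fin_cases i <;> fin_cases j <;> simp [J4] at this <;>
      simp [blk, Matrix.mul_apply, Fin.sum_univ_two] <;> linear_combination this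
  · ext i j
    have := e ⟨i, by omega⟩ ⟨2 + j, by omega⟩
    fin_cases i <;> fin_cases j <;> simp [J4] at this <;>
      simp [blk, Matrix.mul_apply, Fin.sum_univ_two] <;> linear_combination this

lemma blk_star (γ : Matrix (Fin 4) (Fin 4) ℤ) (r s : Fin 2) : (blk γ r s)ᴴ = (blk γ r s)ᵀ := by
  ext i j; simp [blk]

lemma blk_mapstar (γ : Matrix (Fin 4) (Fin 4) ℤ) (r s : Fin 2) :
    (blk γ r s).map star = blk γ r s := by
  ext i j; simp [blk]
section CO
open scoped ComplexOrder
/-- numerator -/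
def num (γ : Matrix (Fin 4) (Fin 4) ℤ) (τ : Fin 2 → Fin 2 → ℂ) : Matrix (Fin 2) (Fin 2) ℂ :=
  blk γ 0 0 * Matrix.of τ + blk γ 0 1

lemma of_moeb (γ : Matrix (Fin 4) (Fin 4) ℤ) (τ : Fin 2 → Fin 2 → ℂ) :
    Matrix.of (moeb γ τ) = num γ τ * (den γ τ)⁻¹ := rfl

/-- imaginary part, as complex matrix -/
def YC (τ : Fin 2 → Fin 2 → ℂ) : Matrix (Fin 2) (Fin 2) ℂ := Matrix.of fun i j => ((τ i j).im : ℂ)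

lemma symm_of_H2 {τ : Fin 2 → Fin 2 → ℂ} (h : τ ∈ H2) : (Matrix.of τ)ᵀ = Matrix.of τ := h.1

lemma sub_star_of_symm {τ : Fin 2 → Fin 2 → ℂ} (h : (Matrix.of τ)ᵀ = Matrix.of τ) :
    Matrix.of τ - (Matrix.of τ)ᴴ = (2 * I) • YC τ := by
  ext i j
  have h2 : τ j i = τ i j := congrFun (congrFun h i) j
  simp only [Matrix.sub_apply, Matrix.of_apply, conjTranspose_apply, Matrix.smul_apply, YC, h2,
    smul_eq_mul]
  apply Complex.ext <;> simp
  ring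

lemma YC_posDef {τ : Fin 2 → Fin 2 → ℂ} (h : τ ∈ H2) : (YC τ).PosDef := by
  have hs : τ 1 0 = τ 0 1 := congrFun (congrFun h.1 0) 1
  have hp := h.2
  rw [posDef_iff_dotProduct_mulVec] at hp ⊢
  refine ⟨?_, fun x hx => ?_⟩
  · ext i j
    have h2 : τ j i = τ i j := congrFun (congrFun h.1 i) j
    simp [YC, h2]
  · have hre : star x ⬝ᵥ (YC τ *ᵥ x) =
      ((star (fun i => (x i).re) ⬝ᵥ ((Matrix.of fun i j => (τ i j).im) *ᵥ (fun i => (x i).re)) +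
       star (fun i => (x i).im) ⬝ᵥ ((Matrix.of fun i j => (τ i j).im) *ᵥ (fun i => (x i).im)) : ℝ) : ℂ) := by
      apply Complex.ext <;>
      simp [dotProduct, mulVec, Fin.sum_univ_two, YC, hs] <;> ring
    rw [hre]
    have hnn : ∀ y : Fin 2 → ℝ, 0 ≤ star y ⬝ᵥ ((Matrix.of fun i j => (τ i j).im) *ᵥ y) := by
      intro y
      by_cases hy : y = 0
      · simp [hy]
      · exact (hp.2 hy).le
    have : (0 : ℝ) < (star (fun i => (x i).re) ⬝ᵥ ((Matrix.of fun i j => (τ i j).im) *ᵥ (fun i => (x i).re)) +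
       star (fun i => (x i).im) ⬝ᵥ ((Matrix.of fun i j => (τ i j).im) *ᵥ (fun i => (x i).im)) : ℝ) := by
      by_cases h1 : (fun i => (x i).re) = 0
      · have h2 : (fun i => (x i).im) ≠ 0 := by
          intro h2; apply hx; funext i
          exact Complex.ext (congrFun h1 i) (congrFun h2 i)
        exact add_pos_of_nonneg_of_pos (hnn _) (hp.2 h2)
      · exact add_pos_of_pos_of_nonneg (hp.2 h1) (hnn _)
    exact_mod_cast this

lemma mem_H2_of {τ : Fin 2 → Fin 2 → ℂ} (h : (Matrix.of τ)ᵀ = Matrix.of τ) (hY : (YC τ).PosDef) :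
    τ ∈ H2 := by
  refine ⟨h, ?_⟩
  rw [posDef_iff_dotProduct_mulVec] at hY ⊢
  refine ⟨?_, fun x hx => ?_⟩
  · ext i j
    have h2 : τ j i = τ i j := congrFun (congrFun h i) j
    simp [h2]
  · have h0 : (fun i => (x i : ℂ)) ≠ 0 := by
      intro h0; apply hx; funext i
      simpa using congrFun h0 i
    have := hY.2 h0
    have e : star (fun i => (x i : ℂ)) ⬝ᵥ (YC τ *ᵥ (fun i => (x i : ℂ))) =
      ((star x ⬝ᵥ ((Matrix.of fun i j => (τ i j).im) *ᵥ x) : ℝ) : ℂ) := by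
      simp [dotProduct, mulVec, Fin.sum_univ_two, YC]
    rw [e] at this
    exact_mod_cast this

lemma num_den_T {γ : Matrix (Fin 4) (Fin 4) ℤ} (hγ : γ ∈ Sp4Z) {τ : Fin 2 → Fin 2 → ℂ}
    (hτ : τ ∈ H2) : (num γ τ)ᵀ * den γ τ = (den γ τ)ᵀ * num γ τ := by
  obtain ⟨h1, h2, h3⟩ := blk_rel hγ
  have h3' := congrArg Matrix.transpose h3
  simp only [transpose_mul, transpose_add, transpose_one, transpose_transpose] at h3'
  simp only [num, den, transpose_add, transpose_mul, symm_of_H2 hτ]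
  generalize Matrix.of τ = T at *
  have e1 : T * (blk γ 0 0)ᵀ * (blk γ 1 0 * T) = T * (blk γ 1 0)ᵀ * (blk γ 0 0 * T) := by
    calc _ = T * ((blk γ 0 0)ᵀ * blk γ 1 0) * T := by simp only [Matrix.mul_assoc]
      _ = _ := by rw [h1]; simp only [Matrix.mul_assoc]
  have e2 : T * (blk γ 0 0)ᵀ * (blk γ 1 1) = T * (blk γ 1 0)ᵀ * (blk γ 0 1) + T := by
    rw [Matrix.mul_assoc, h3, Matrix.mul_add, Matrix.mul_one, Matrix.mul_assoc]
  have e3 : (blk γ 1 1)ᵀ * (blk γ 0 0 * T) = (blk γ 0 1)ᵀ * (blk γ 1 0 * T) + T := by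
    rw [← Matrix.mul_assoc, h3', Matrix.add_mul, Matrix.one_mul, Matrix.mul_assoc]
  rw [Matrix.add_mul, Matrix.mul_add, Matrix.mul_add, Matrix.add_mul, Matrix.mul_add,
    Matrix.mul_add, e1, e2, e3, h2]
  abel

lemma num_den_H {γ : Matrix (Fin 4) (Fin 4) ℤ} (hγ : γ ∈ Sp4Z) {τ : Fin 2 → Fin 2 → ℂ}
    (hτ : τ ∈ H2) : (den γ τ)ᴴ * num γ τ - (num γ τ)ᴴ * den γ τ = (2 * I) • YC τ := by
  obtain ⟨h1, h2, h3⟩ := blk_rel hγ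
  have h3' := congrArg Matrix.transpose h3
  simp only [transpose_mul, transpose_add, transpose_one, transpose_transpose] at h3'
  rw [← sub_star_of_symm (symm_of_H2 hτ)]
  simp only [num, den, conjTranspose_add, conjTranspose_mul, blk_star]
  generalize (Matrix.of τ)ᴴ = S at *
  generalize Matrix.of τ = T at *
  have e1 : S * (blk γ 0 0)ᵀ * (blk γ 1 0 * T) = S * (blk γ 1 0)ᵀ * (blk γ 0 0 * T) := by
    calc _ = S * ((blk γ 0 0)ᵀ * blk γ 1 0) * T := by simp only [Matrix.mul_assoc]
      _ = _ := by rw [h1]; simp only [Matrix.mul_assoc]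
  have e2 : S * (blk γ 0 0)ᵀ * (blk γ 1 1) = S * (blk γ 1 0)ᵀ * (blk γ 0 1) + S := by
    rw [Matrix.mul_assoc, h3, Matrix.mul_add, Matrix.mul_one, Matrix.mul_assoc]
  have e3 : (blk γ 1 1)ᵀ * (blk γ 0 0 * T) = (blk γ 0 1)ᵀ * (blk γ 1 0 * T) + T := by
    rw [← Matrix.mul_assoc, h3', Matrix.add_mul, Matrix.one_mul, Matrix.mul_assoc]
  rw [Matrix.add_mul, Matrix.mul_add, Matrix.mul_add, Matrix.add_mul, Matrix.mul_add,
    Matrix.mul_add, e1, e2, e3, h2]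
  abel

lemma den_det {γ : Matrix (Fin 4) (Fin 4) ℤ} (hγ : γ ∈ Sp4Z) {τ : Fin 2 → Fin 2 → ℂ}
    (hτ : τ ∈ H2) : (den γ τ).det ≠ 0 := by
  intro h0
  obtain ⟨v, hv, hDv⟩ := Matrix.exists_mulVec_eq_zero_iff.2 h0
  have hpos := (YC_posDef hτ).dotProduct_mulVec_pos hv
  have h := congrArg (fun M : Matrix (Fin 2) (Fin 2) ℂ => star v ⬝ᵥ (M *ᵥ v)) (num_den_H hγ hτ)
  simp only [Matrix.sub_mulVec, ← Matrix.mulVec_mulVec, hDv, Matrix.mulVec_zero, sub_zero,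
    Matrix.smul_mulVec, dotProduct_smul] at h
  have hz : star v ⬝ᵥ ((den γ τ)ᴴ *ᵥ (num γ τ *ᵥ v)) = 0 := by
    rw [Matrix.dotProduct_mulVec, ← Matrix.star_mulVec, hDv]; simp
  rw [hz] at h
  have : star v ⬝ᵥ (YC τ *ᵥ v) = 0 := by
    simpa [I_ne_zero] using h.symm
  rw [this] at hpos
  exact lt_irrefl _ hpos

lemma moeb_mem {γ : Matrix (Fin 4) (Fin 4) ℤ} (hγ : γ ∈ Sp4Z) {τ : Fin 2 → Fin 2 → ℂ}
    (hτ : τ ∈ H2) : moeb γ τ ∈ H2 := by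
  have hu : IsUnit (den γ τ).det := isUnit_iff_ne_zero.2 (den_det hγ hτ)
  have hT := num_den_T hγ hτ
  have hH := num_den_H hγ hτ
  have hr : den γ τ * (den γ τ)⁻¹ = 1 := Matrix.mul_nonsing_inv _ hu
  have hl : (den γ τ)⁻¹ * den γ τ = 1 := Matrix.nonsing_inv_mul _ hu
  have hsym : (Matrix.of (moeb γ τ))ᵀ = Matrix.of (moeb γ τ) := by
    rw [of_moeb, transpose_mul]
    have h1 : ((den γ τ)⁻¹)ᵀ * (den γ τ)ᵀ = 1 := by rw [← transpose_mul, hr, transpose_one]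
    calc ((den γ τ)⁻¹)ᵀ * (num γ τ)ᵀ
        = ((den γ τ)⁻¹)ᵀ * ((num γ τ)ᵀ * den γ τ) * (den γ τ)⁻¹ := by
          simp only [Matrix.mul_assoc, hr, Matrix.mul_one]
      _ = (((den γ τ)⁻¹)ᵀ * (den γ τ)ᵀ) * num γ τ * (den γ τ)⁻¹ := by
          rw [hT]; simp only [Matrix.mul_assoc]
      _ = _ := by rw [h1, Matrix.one_mul]
  refine mem_H2_of hsym ?_
  have hY : YC (moeb γ τ) = ((den γ τ)⁻¹)ᴴ * YC τ * (den γ τ)⁻¹ := by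
    have h1 : ((den γ τ)⁻¹)ᴴ * (den γ τ)ᴴ = 1 := by
      rw [← conjTranspose_mul, hr, conjTranspose_one]
    have h2 : (2 * I) • YC (moeb γ τ) = (2 * I) • (((den γ τ)⁻¹)ᴴ * YC τ * (den γ τ)⁻¹) := by
      rw [← sub_star_of_symm hsym, ← Matrix.smul_mul, ← Matrix.mul_smul, ← hH, of_moeb,
        conjTranspose_mul, Matrix.mul_sub, Matrix.sub_mul]
      congr 1
      · rw [← Matrix.mul_assoc, h1, Matrix.one_mul]
      · simp only [Matrix.mul_assoc, hr, Matrix.mul_one]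
    exact smul_right_injective _ (by simp [I_ne_zero]) h2
  rw [hY]
  refine (YC_posDef hτ).conjTranspose_mul_mul_same ?_
  rw [Matrix.mulVec_injective_iff_isUnit, Matrix.isUnit_nonsing_inv_iff, Matrix.isUnit_iff_isUnit_det]
  exact hu

lemma den_mul (γ : Matrix (Fin 4) (Fin 4) ℤ) {δ : Matrix (Fin 4) (Fin 4) ℤ} (hδ : δ ∈ Sp4Z)
    {τ : Fin 2 → Fin 2 → ℂ} (hτ : τ ∈ H2) :
    den (γ * δ) τ = den γ (moeb δ τ) * den δ τ ∧ num (γ * δ) τ = num γ (moeb δ τ) * den δ τ := by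
  have hu : IsUnit (den δ τ).det := isUnit_iff_ne_zero.2 (den_det hδ hτ)
  have hl : (den δ τ)⁻¹ * den δ τ = 1 := Matrix.nonsing_inv_mul _ hu
  constructor
  · conv_rhs => rw [den, of_moeb, Matrix.add_mul, Matrix.mul_assoc, Matrix.mul_assoc, hl, Matrix.mul_one]
    simp only [den, num, blk_mul, Matrix.mul_add, Matrix.add_mul, Matrix.mul_assoc]
    abel
  · conv_rhs => rw [num, of_moeb, Matrix.add_mul, Matrix.mul_assoc, Matrix.mul_assoc, hl, Matrix.mul_one]
    simp only [den, num, blk_mul, Matrix.mul_add, Matrix.add_mul, Matrix.mul_assoc]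
    abel

lemma moeb_mul (γ : Matrix (Fin 4) (Fin 4) ℤ) {δ : Matrix (Fin 4) (Fin 4) ℤ}
    (hδ : δ ∈ Sp4Z) {τ : Fin 2 → Fin 2 → ℂ} (hτ : τ ∈ H2) :
    moeb (γ * δ) τ = moeb γ (moeb δ τ) := by
  have hu : IsUnit (den δ τ).det := isUnit_iff_ne_zero.2 (den_det hδ hτ)
  have : Matrix.of (moeb (γ * δ) τ) = Matrix.of (moeb γ (moeb δ τ)) := by
    rw [of_moeb, of_moeb γ, (den_mul γ hδ hτ).1, (den_mul γ hδ hτ).2, Matrix.mul_inv_rev,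
      Matrix.mul_assoc, ← Matrix.mul_assoc (den δ τ), Matrix.mul_nonsing_inv _ hu, Matrix.one_mul]
  exact this

lemma slashS_mul (j : ℕ) (k : ℤ) (γ : Matrix (Fin 4) (Fin 4) ℤ) {δ : Matrix (Fin 4) (Fin 4) ℤ}
    (hδ : δ ∈ Sp4Z)
    (F : (Fin 2 → Fin 2 → ℂ) → (Fin (j + 1) → ℂ)) {τ : Fin 2 → Fin 2 → ℂ} (hτ : τ ∈ H2) :
    slashS j k δ (slashS j k γ F) τ = slashS j k (γ * δ) F τ := by
  unfold slashS
  rw [moeb_mul γ hδ hτ, (den_mul γ hδ hτ).1, Matrix.mul_inv_rev, symAct_mul, symAct_smul, smul_smul,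
    Matrix.det_mul, mul_zpow, mul_comm]

lemma slashS_of_wt (j : ℕ) (k : ℤ) {γ : Matrix (Fin 4) (Fin 4) ℤ} (hγ : γ ∈ Sp4Z)
    (F : (Fin 2 → Fin 2 → ℂ) → (Fin (j + 1) → ℂ)) {τ : Fin 2 → Fin 2 → ℂ} (hτ : τ ∈ H2) :
    slashS j k γ F τ = F τ ↔ F (moeb γ τ) = (1 : ℂ) • wt j k (den γ τ) (F τ) := by
  have h0 := den_det hγ hτ
  have hu : IsUnit (den γ τ).det := isUnit_iff_ne_zero.2 h0
  have hk : (den γ τ).det ^ k ≠ 0 := zpow_ne_zero _ h0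
  unfold slashS wt
  rw [one_smul]
  constructor
  · intro h
    rw [← h, symAct_smul, ← symAct_mul, Matrix.mul_nonsing_inv _ hu, symAct_one, smul_smul,
      ← zpow_add₀ h0, add_neg_cancel, zpow_zero, one_smul]
  · intro h
    rw [h, symAct_smul, ← symAct_mul, Matrix.nonsing_inv_mul _ hu, symAct_one, smul_smul,
      ← zpow_add₀ h0, neg_add_cancel, zpow_zero, one_smul]

end CO
/-- the map `τ ↦ -conj τ` -/
def cH (τ : Fin 2 → Fin 2 → ℂ) : Fin 2 → Fin 2 → ℂ := -star τ

lemma cH_mem {τ : Fin 2 → Fin 2 → ℂ} (h : τ ∈ H2) : cH τ ∈ H2 := by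
  refine ⟨?_, ?_⟩
  · ext i j
    have h2 : τ j i = τ i j := congrFun (congrFun h.1 i) j
    simp [cH, h2]
  · have : (Matrix.of fun i j => (cH τ i j).im) = Matrix.of fun i j => (τ i j).im := by
      ext i j; simp [cH]
    rw [this]; exact h.2

lemma of_cH (τ : Fin 2 → Fin 2 → ℂ) : Matrix.of (cH τ) = -((Matrix.of τ)ᴴ)ᵀ := by
  ext i j; simp [cH]

lemma blk_HT (γ : Matrix (Fin 4) (Fin 4) ℤ) (r s : Fin 2) : ((blk γ r s)ᴴ)ᵀ = blk γ r s := by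
  ext i j; simp [blk]

lemma den_pr (γ : Matrix (Fin 4) (Fin 4) ℤ) (τ : Fin 2 → Fin 2 → ℂ) :
    den (pr γ) (cH τ) = ((den γ τ)ᴴ)ᵀ := by
  obtain ⟨_, _, h3, h4⟩ := blk_pr γ
  simp only [den, h3, h4, of_cH, conjTranspose_add, transpose_add, conjTranspose_mul,
    transpose_mul, blk_HT, Matrix.neg_mul, Matrix.mul_neg, neg_neg]

lemma num_pr (γ : Matrix (Fin 4) (Fin 4) ℤ) (τ : Fin 2 → Fin 2 → ℂ) :
    num (pr γ) (cH τ) = -((num γ τ)ᴴ)ᵀ := by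
  obtain ⟨h1, h2, _, _⟩ := blk_pr γ
  simp only [num, h1, h2, of_cH, conjTranspose_add, transpose_add, conjTranspose_mul,
    transpose_mul, blk_HT, Matrix.mul_neg, neg_add]

lemma moeb_pr (γ : Matrix (Fin 4) (Fin 4) ℤ) (τ : Fin 2 → Fin 2 → ℂ) :
    moeb (pr γ) (cH τ) = cH (moeb γ τ) := by
  have : Matrix.of (moeb (pr γ) (cH τ)) = Matrix.of (cH (moeb γ τ)) := by
    rw [of_moeb, of_cH, of_moeb, num_pr, den_pr, ← transpose_nonsing_inv,
      ← conjTranspose_nonsing_inv, Matrix.neg_mul, conjTranspose_mul, transpose_mul]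
  exact this

lemma slash_conj (j : ℕ) (k : ℤ) (γ : Matrix (Fin 4) (Fin 4) ℤ)
    (A : (Fin 2 → Fin 2 → ℂ) → (Fin (j + 1) → ℂ)) (τ : Fin 2 → Fin 2 → ℂ) :
    slashS j k γ (fun τ => cv (A (cH τ))) τ = cv (slashS j k (pr γ) A (cH τ)) := by
  unfold slashS
  rw [cv_smul, ← symAct_cv, moeb_pr, den_pr, ← transpose_nonsing_inv, ← conjTranspose_nonsing_inv]
  congr 1
  · simp [det_conjTranspose]
  · congr 1
    ext i j; simp

lemma differentiable_conj {j : ℕ} {F : (Fin 2 → Fin 2 → ℂ) → (Fin (j + 1) → ℂ)}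
    (hF : DifferentiableOn ℂ F H2) : DifferentiableOn ℂ (fun τ => cv (F (cH τ))) H2 := by
  intro τ hτ
  obtain ⟨F', hF'⟩ := hF (cH τ) (cH_mem hτ)
  have h1 : HasFDerivWithinAt (𝕜 := ℝ) cH
      (-((starL' ℝ : (Fin 2 → Fin 2 → ℂ) ≃L[ℝ] _) : (Fin 2 → Fin 2 → ℂ) →L[ℝ] (Fin 2 → Fin 2 → ℂ)))
      H2 τ :=
    ((starL' ℝ : (Fin 2 → Fin 2 → ℂ) ≃L[ℝ] _) :
      (Fin 2 → Fin 2 → ℂ) →L[ℝ] (Fin 2 → Fin 2 → ℂ)).hasFDerivWithinAt.neg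
  have h2 := (hF'.restrictScalars ℝ).comp τ h1 (fun x hx => cH_mem hx)
  have h3 := ((starL' ℝ : (Fin (j + 1) → ℂ) ≃L[ℝ] _) :
    (Fin (j + 1) → ℂ) →L[ℝ] (Fin (j + 1) → ℂ)).hasFDerivAt.comp_hasFDerivWithinAt τ h2
  let L : (Fin 2 → Fin 2 → ℂ) →L[ℂ] (Fin (j + 1) → ℂ) :=
    { toFun := fun x => star (F' (-star x))
      map_add' := fun x y => by simp [neg_add, map_add]; abel
      map_smul' := fun a x => by
        simp only [star_smul, ← smul_neg, map_smul, RingHom.id_apply, star_star]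
      cont := by
        exact continuous_star.comp (F'.continuous.comp (continuous_star.neg)) }
  refine ⟨L, HasFDerivWithinAt.of_restrictScalars ℝ h3 ?_⟩
  ext x
  rfl

lemma den_diff (γ : Matrix (Fin 4) (Fin 4) ℤ) (i j : Fin 2) :
    Differentiable ℂ (fun τ : Fin 2 → Fin 2 → ℂ => den γ τ i j) := by
  simp only [den, Matrix.add_apply, Matrix.mul_apply, Matrix.of_apply, Fin.sum_univ_two]
  fun_prop

lemma num_diff (γ : Matrix (Fin 4) (Fin 4) ℤ) (i j : Fin 2) :
    Differentiable ℂ (fun τ : Fin 2 → Fin 2 → ℂ => num γ τ i j) := by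
  simp only [num, Matrix.add_apply, Matrix.mul_apply, Matrix.of_apply, Fin.sum_univ_two]
  fun_prop

lemma det_diff (γ : Matrix (Fin 4) (Fin 4) ℤ) :
    Differentiable ℂ (fun τ : Fin 2 → Fin 2 → ℂ => (den γ τ).det) := by
  simp only [det_fin_two]
  have := den_diff γ
  fun_prop

lemma deninv_diff {γ : Matrix (Fin 4) (Fin 4) ℤ} (hγ : γ ∈ Sp4Z) (i j : Fin 2) :
    DifferentiableOn ℂ (fun τ : Fin 2 → Fin 2 → ℂ => (den γ τ)⁻¹ i j) H2 := by
  simp only [Matrix.inv_def, Ring.inverse_eq_inv', Matrix.smul_apply, smul_eq_mul]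
  refine DifferentiableOn.mul ?_ ?_
  · exact (det_diff γ).differentiableOn.inv fun τ hτ => den_det hγ hτ
  · have := den_diff γ
    apply Differentiable.differentiableOn
    simp only [adjugate_fin_two]
    fin_cases i <;> fin_cases j <;> simp <;> fun_prop

lemma moeb_diff {γ : Matrix (Fin 4) (Fin 4) ℤ} (hγ : γ ∈ Sp4Z) :
    DifferentiableOn ℂ (moeb γ) H2 := by
  rw [differentiableOn_pi]; intro i
  rw [differentiableOn_pi]; intro j
  show DifferentiableOn ℂ (fun τ => (num γ τ * (den γ τ)⁻¹) i j) H2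
  simp only [Matrix.mul_apply]
  exact DifferentiableOn.fun_sum fun l _ =>
    (num_diff γ i l).differentiableOn.mul (deninv_diff hγ l j)

/-- coefficientwise differentiable family of polynomials -/
def PD (P : (Fin 2 → Fin 2 → ℂ) → Polynomial ℂ) : Prop :=
  ∀ n, DifferentiableOn ℂ (fun τ => (P τ).coeff n) H2

lemma PD_mul {P Q : (Fin 2 → Fin 2 → ℂ) → Polynomial ℂ} (hP : PD P) (hQ : PD Q) :
    PD (fun τ => P τ * Q τ) := by
  intro n
  simp only [Polynomial.coeff_mul]
  exact DifferentiableOn.fun_sum fun l _ => (hP _).mul (hQ _)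

lemma PD_pow {P : (Fin 2 → Fin 2 → ℂ) → Polynomial ℂ} (hP : PD P) (s : ℕ) :
    PD (fun τ => P τ ^ s) := by
  induction s with
  | zero => intro n; simp only [pow_zero]; exact differentiableOn_const _
  | succ s ih => simp only [pow_succ]; exact PD_mul ih hP

lemma PD_lin {a b : (Fin 2 → Fin 2 → ℂ) → ℂ} (ha : DifferentiableOn ℂ a H2)
    (hb : DifferentiableOn ℂ b H2) :
    PD (fun τ => Polynomial.C (a τ) + Polynomial.C (b τ) * Polynomial.X) := by
  intro n
  simp only [Polynomial.coeff_add, Polynomial.coeff_C, Polynomial.coeff_C_mul, Polynomial.coeff_X]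
  split_ifs <;> fun_prop

lemma slashS_diff (j : ℕ) (k : ℤ) {γ : Matrix (Fin 4) (Fin 4) ℤ} (hγ : γ ∈ Sp4Z)
    {F : (Fin 2 → Fin 2 → ℂ) → (Fin (j + 1) → ℂ)} (hF : DifferentiableOn ℂ F H2) :
    DifferentiableOn ℂ (slashS j k γ F) H2 := by
  have hFm : DifferentiableOn ℂ (fun τ => F (moeb γ τ)) H2 :=
    hF.comp (moeb_diff hγ) fun τ hτ => moeb_mem hγ hτ
  rw [differentiableOn_pi] at hFm ⊢
  intro i
  show DifferentiableOn ℂ (fun τ => (den γ τ).det ^ (-k) *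
    ∑ l, symCoeff j ((den γ τ)⁻¹) l i * F (moeb γ τ) l) H2
  refine DifferentiableOn.mul ?_ (DifferentiableOn.fun_sum fun l _ => DifferentiableOn.mul ?_ (hFm l))
  · exact DifferentiableOn.zpow (det_diff γ).differentiableOn (Or.inl fun τ hτ => den_det hγ hτ)
  · exact PD_mul (PD_pow (PD_lin (deninv_diff hγ _ _) (deninv_diff hγ _ _)) _)
      (PD_pow (PD_lin (deninv_diff hγ _ _) (deninv_diff hγ _ _)) _) _

lemma mulS_diff {j : ℕ} {A B : (Fin 2 → Fin 2 → ℂ) → (Fin (j + 1) → ℂ)}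
    (hA : DifferentiableOn ℂ A H2) (hB : DifferentiableOn ℂ B H2) :
    DifferentiableOn ℂ (fun τ => mulS j (A τ) (B τ)) H2 := by
  rw [differentiableOn_pi] at hA hB ⊢
  intro i
  unfold mulS
  refine DifferentiableOn.fun_sum fun l _ => DifferentiableOn.fun_sum fun m _ => ?_
  split_ifs
  · exact (hA l).mul (hB m)
  · exact differentiableOn_const _

lemma H2_iff (τ : Fin 2 → Fin 2 → ℂ) : τ ∈ H2 ↔ τ 0 1 = τ 1 0 ∧ 0 < (τ 0 0).im ∧
    0 < (τ 0 0).im * (τ 1 1).im - (τ 0 1).im * (τ 0 1).im := by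
  constructor
  · intro h
    have hs : τ 0 1 = τ 1 0 := congrFun (congrFun h.1 1) 0
    refine ⟨hs, h.2.diag_pos (i := 0), ?_⟩
    have := h.2.det_pos
    rw [det_fin_two] at this
    simpa [← hs] using this
  · rintro ⟨hs, ha, hd⟩
    refine ⟨?_, ?_⟩
    · ext i j; fin_cases i <;> fin_cases j <;> simp [hs]
    · refine PosDef.of_dotProduct_mulVec_pos ?_ fun x hx => ?_
      · ext i j; fin_cases i <;> fin_cases j <;> simp [hs]
      · simp only [dotProduct, mulVec, Fin.sum_univ_two, Matrix.of_apply, Pi.star_apply,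
          star_trivial, ← hs]
        generalize (τ 0 0).im = a at *
        generalize (τ 0 1).im = b at *
        generalize (τ 1 1).im = d at *
        have e : a * (x 0 * (a * x 0 + b * x 1) + x 1 * (b * x 0 + d * x 1)) =
          (a * x 0 + b * x 1) ^ 2 + (a * d - b * b) * x 1 ^ 2 := by ring
        refine pos_of_mul_pos_right (a := a) ?_ ha.le
        rw [e]
        by_cases h1 : x 1 = 0
        · have h0 : x 0 ≠ 0 := by
            intro h0; apply hx; funext i; fin_cases i
            · exact h0
            · exact h1
          rw [h1]
          have := mul_ne_zero ha.ne' h0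
          simp only [mul_zero, add_zero]
          positivity
        · positivity

lemma identity_thm {j : ℕ} {F : (Fin 2 → Fin 2 → ℂ) → (Fin (j + 1) → ℂ)}
    (hF : DifferentiableOn ℂ F H2) (h0 : ∀ τ ∈ H2, (∀ i j, (τ i j).re = 0) → F τ = 0) :
    ∀ τ ∈ H2, F τ = 0 := by
  intro τ hτ
  let path : ℂ → Fin 2 → Fin 2 → ℂ := fun z i j => z * ((τ i j).re : ℂ) + I * ((τ i j).im : ℂ)
  let U : Set ℂ := {z | path z ∈ H2}
  have him : ∀ z i j, (path z i j).im = z.im * (τ i j).re + (τ i j).im := by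
    intro z i j; simp [path]
  have hs : τ 0 1 = τ 1 0 := ((H2_iff τ).1 hτ).1
  have hps : ∀ z, path z 0 1 = path z 1 0 := by intro z; simp [path, hs]
  have hUo : IsOpen U := by
    have : U = {z | 0 < (path z 0 0).im} ∩
      {z | 0 < (path z 0 0).im * (path z 1 1).im - (path z 0 1).im * (path z 0 1).im} := by
      ext z
      show path z ∈ H2 ↔ _
      rw [H2_iff]
      simp [hps z]
    rw [this]
    simp only [him]
    refine IsOpen.inter ?_ ?_ <;> refine isOpen_lt (by fun_prop) (by fun_prop)
  have hUc : Convex ℝ U := by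
    rw [convex_iff_forall_pos]
    intro z hz w hw a b ha hb hab
    have hz : path z ∈ H2 := hz
    have hw : path w ∈ H2 := hw
    show path _ ∈ H2
    have h1 := (hz.2.smul ha).add (hw.2.smul hb)
    refine ⟨?_, ?_⟩
    · ext i j; fin_cases i <;> fin_cases j <;> simp [hps]
    · convert h1 using 1
      ext i j
      simp only [him, Matrix.add_apply, Matrix.smul_apply, Matrix.of_apply, smul_eq_mul,
        Complex.add_im, Complex.smul_im]
      have : (τ i j).im = (a + b) * (τ i j).im := by rw [hab, one_mul]
      linear_combination this
  have hpd : Differentiable ℂ path := by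
    rw [differentiable_pi]; intro i
    rw [differentiable_pi]; intro j
    fun_prop
  have hfd : DifferentiableOn ℂ (fun z => F (path z)) U :=
    hF.comp hpd.differentiableOn fun z hz => hz
  have han := hfd.analyticOnNhd hUo
  have hmem : ∀ z : ℂ, z.im = 0 → z ∈ U := by
    intro z hz
    show path z ∈ H2
    rw [H2_iff] at hτ ⊢
    refine ⟨hps z, ?_, ?_⟩
    · rw [him, hz]; simpa using hτ.2.1
    · simp only [him, hz]; simpa using hτ.2.2
  have h00 : (0 : ℂ) ∈ U := hmem 0 rfl
  have htend : Tendsto (fun s : ℝ => (s : ℂ) * I) (𝓝[≠] 0) (𝓝[≠] 0) := by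
    refine tendsto_nhdsWithin_iff.2 ⟨?_, ?_⟩
    · have : Continuous (fun s : ℝ => (s : ℂ) * I) := by fun_prop
      have := this.tendsto 0
      simp only [Complex.ofReal_zero, zero_mul] at this
      exact this.mono_left nhdsWithin_le_nhds
    · filter_upwards [self_mem_nhdsWithin] with s hs
      have : s ≠ 0 := hs
      simp [this, I_ne_zero]
  have hfreq : ∃ᶠ z in 𝓝[≠] (0 : ℂ), F (path z) = 0 := by
    refine htend.frequently (Eventually.frequently ?_)
    have := (htend.mono_right nhdsWithin_le_nhds).eventually (hUo.mem_nhds h00)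
    filter_upwards [this] with s hs
    refine h0 _ hs fun i j => ?_
    simp [path]
  have := han.eqOn_zero_of_preconnected_of_frequently_eq_zero hUc.isPreconnected h00 hfreq
    (hmem 1 (by simp))
  have e : path 1 = τ := by
    funext i j
    apply Complex.ext <;> simp [path]
  simpa [e] using this
open Classical in
/-- the image of `Sp(4,ℤ)` mod 2 -/
def RR : Finset (Matrix (Fin 4) (Fin 4) (ZMod 2)) :=
  Finset.univ.filter fun r => ∃ γ ∈ Sp4Z, red γ = r

lemma mem_RR {r : Matrix (Fin 4) (Fin 4) (ZMod 2)} : r ∈ RR ↔ ∃ γ ∈ Sp4Z, red γ = r := by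
  simp [RR]

open Classical in
/-- representatives -/
def rep (r : Matrix (Fin 4) (Fin 4) (ZMod 2)) : Matrix (Fin 4) (Fin 4) ℤ :=
  if h : ∃ γ ∈ Sp4Z, red γ = r then h.choose else 1

lemma rep_spec {r : Matrix (Fin 4) (Fin 4) (ZMod 2)} (h : r ∈ RR) :
    rep r ∈ Sp4Z ∧ red (rep r) = r := by
  have h := mem_RR.1 h
  rw [rep, dif_pos h]
  exact h.choose_spec

lemma sum_rep {V : Type*} [AddCommMonoid V] (f : Matrix (Fin 4) (Fin 4) ℤ → V)
    (hf : ∀ γ ∈ Sp4Z, ∀ δ ∈ Sp4Z, red γ = red δ → f γ = f δ)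
    {δ : Matrix (Fin 4) (Fin 4) ℤ} (hδ : δ ∈ Sp4Z) :
    ∑ r ∈ RR, f (rep r * δ) = ∑ r ∈ RR, f (rep r) := by
  have h1 : red δ * red (sinv δ) = 1 := by rw [← red_mul, mul_sinv hδ, red_one]
  have h2 : red (sinv δ) * red δ = 1 := by rw [← red_mul, sinv_mul hδ, red_one]
  have hm : ∀ r ∈ RR, ∀ δ ∈ Sp4Z, r * red δ ∈ RR := by
    intro r hr δ hδ
    obtain ⟨γ, hγ, rfl⟩ := mem_RR.1 hr
    exact mem_RR.2 ⟨γ * δ, Sp4Z_mul hγ hδ, red_mul _ _⟩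
  refine Finset.sum_nbij' (fun r => r * red δ) (fun r => r * red (sinv δ)) ?_ ?_ ?_ ?_ ?_
  · intro r hr; exact hm r hr δ hδ
  · intro r hr; exact hm r hr _ (sinv_mem hδ)
  · intro r _; rw [Matrix.mul_assoc, h1, Matrix.mul_one]
  · intro r _; rw [Matrix.mul_assoc, h2, Matrix.mul_one]
  · intro r hr
    have hs := rep_spec hr
    have hs' := rep_spec (hm r hr δ hδ)
    refine hf _ (Sp4Z_mul hs.1 hδ) _ hs'.1 ?_
    rw [red_mul, hs.2, hs'.2]

section main
variable {j : ℕ} {k : ℤ} {F : (Fin 2 → Fin 2 → ℂ) → (Fin (j + 1) → ℂ)}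

lemma slash_level (hF : IsSiegelCuspForm j k Sp4Z2 (fun _ => 1) F)
    {γ : Matrix (Fin 4) (Fin 4) ℤ} (hγ : γ ∈ Sp4Z) (h1 : red γ = 1)
    {τ : Fin 2 → Fin 2 → ℂ} (hτ : τ ∈ H2) : slashS j k γ F τ = F τ :=
  (slashS_of_wt j k hγ F hτ).2 (hF.2.1 γ (mem_Sp4Z2 hγ h1) τ hτ)

lemma slash_congr (A B : (Fin 2 → Fin 2 → ℂ) → (Fin (j + 1) → ℂ))
    (hAB : ∀ τ ∈ H2, A τ = B τ) {γ : Matrix (Fin 4) (Fin 4) ℤ} (hγ : γ ∈ Sp4Z)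
    {τ : Fin 2 → Fin 2 → ℂ} (hτ : τ ∈ H2) : slashS j k γ A τ = slashS j k γ B τ := by
  unfold slashS; rw [hAB _ (moeb_mem hγ hτ)]

lemma slash_red (hF : IsSiegelCuspForm j k Sp4Z2 (fun _ => 1) F)
    {γ δ : Matrix (Fin 4) (Fin 4) ℤ} (hγ : γ ∈ Sp4Z) (hδ : δ ∈ Sp4Z) (h : red γ = red δ)
    {τ : Fin 2 → Fin 2 → ℂ} (hτ : τ ∈ H2) : slashS j k γ F τ = slashS j k δ F τ := by
  have e : γ = (γ * sinv δ) * δ := by rw [Matrix.mul_assoc, sinv_mul hδ, Matrix.mul_one]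
  have hm : γ * sinv δ ∈ Sp4Z := Sp4Z_mul hγ (sinv_mem hδ)
  have hr : red (γ * sinv δ) = 1 := by
    rw [red_mul, h, ← red_mul, mul_sinv hδ, red_one]
  rw [e, ← slashS_mul j k _ hδ F hτ]
  exact slash_congr _ _ (fun τ hτ => slash_level hF hm hr hτ) hδ hτ

/-- the summand -/
def fS (j : ℕ) (k : ℤ) (F : (Fin 2 → Fin 2 → ℂ) → (Fin (j + 1) → ℂ)) (τ : Fin 2 → Fin 2 → ℂ)
    (γ : Matrix (Fin 4) (Fin 4) ℤ) : Fin (2 * j + 1) → ℂ :=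
  mulS j (slashS j k γ F τ) (cv (slashS j k γ F (cH τ)))

open Classical in
/-- the symmetrization -/
def GG (j : ℕ) (k : ℤ) (F : (Fin 2 → Fin 2 → ℂ) → (Fin (j + 1) → ℂ)) (τ : Fin 2 → Fin 2 → ℂ) :
    Fin (2 * j + 1) → ℂ :=
  if τ ∈ H2 then ∑ r ∈ RR, fS j k F τ (rep r) else 0

lemma fS_red (hF : IsSiegelCuspForm j k Sp4Z2 (fun _ => 1) F)
    {τ : Fin 2 → Fin 2 → ℂ} (hτ : τ ∈ H2) :
    ∀ γ ∈ Sp4Z, ∀ δ ∈ Sp4Z, red γ = red δ → fS j k F τ γ = fS j k F τ δ := by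
  intro γ hγ δ hδ h
  unfold fS
  rw [slash_red hF hγ hδ h hτ, slash_red hF hγ hδ h (cH_mem hτ)]

lemma slash_fS (hF : IsSiegelCuspForm j k Sp4Z2 (fun _ => 1) F)
    {γ δ : Matrix (Fin 4) (Fin 4) ℤ} (hγ : γ ∈ Sp4Z) (hδ : δ ∈ Sp4Z)
    {τ : Fin 2 → Fin 2 → ℂ} (hτ : τ ∈ H2) :
    (den δ τ).det ^ (-(2 * k)) • symAct (2 * j) ((den δ τ)⁻¹) (fS j k F (moeb δ τ) γ) =
      fS j k F τ (γ * δ) := by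
  have h0 := den_det hδ hτ
  have e1 : slashS j k (γ * δ) F τ = slashS j k δ (slashS j k γ F) τ :=
    (slashS_mul j k γ hδ F hτ).symm
  have e2 : cv (slashS j k (γ * δ) F (cH τ)) =
      slashS j k δ (fun τ => cv (slashS j k γ F (cH τ))) τ := by
    rw [slash_conj, slashS_mul j k γ (pr_mem hδ) F (cH_mem hτ),
      slash_red hF (Sp4Z_mul hγ hδ) (Sp4Z_mul hγ (pr_mem hδ)) _ (cH_mem hτ)]
    rw [red_mul, red_mul, red_pr]
  rw [fS, fS, e1, e2, symAct_mulS]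
  refine Eq.trans ?_ (mulS_smul j ((den δ τ).det ^ (-k)) ((den δ τ).det ^ (-k))
    (symAct j ((den δ τ)⁻¹) (slashS j k γ F (moeb δ τ)))
    (symAct j ((den δ τ)⁻¹) (cv (slashS j k γ F (cH (moeb δ τ)))))).symm
  congr 1
  rw [← zpow_add₀ h0]; congr 1; ring

lemma slash_GG (hF : IsSiegelCuspForm j k Sp4Z2 (fun _ => 1) F)
    {δ : Matrix (Fin 4) (Fin 4) ℤ} (hδ : δ ∈ Sp4Z) {τ : Fin 2 → Fin 2 → ℂ} (hτ : τ ∈ H2) :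
    slashS (2 * j) (2 * k) δ (GG j k F) τ = ∑ r ∈ RR, fS j k F τ (rep r * δ) := by
  rw [slashS, GG, if_pos (moeb_mem hδ hτ), symAct_sum, Finset.smul_sum]
  exact Finset.sum_congr rfl fun r hr => slash_fS hF (rep_spec hr).1 hδ hτ

lemma diagH_mem {τ₁ : ℂ} (h : 0 < τ₁.im) {t : ℝ} (ht : 0 < t) : diagH τ₁ (t * I) ∈ H2 := by
  rw [H2_iff]
  simp [diagH, h, ht]

lemma cH_diagH (τ₁ : ℂ) (t : ℝ) : cH (diagH τ₁ (t * I)) = diagH (-star τ₁) (t * I) := by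
  funext i j
  fin_cases i <;> fin_cases j <;> simp [cH, diagH]

lemma GG_cusp (hF : IsSiegelCuspForm j k Sp4Z2 (fun _ => 1) F) :
    IsSiegelCuspForm (2 * j) (2 * k) Sp4Z (fun _ => 1) (GG j k F) := by
  refine ⟨?_, ?_, ?_, ?_⟩
  · have : DifferentiableOn ℂ (fun τ => ∑ r ∈ RR, fS j k F τ (rep r)) H2 := by
      refine DifferentiableOn.fun_sum fun r hr => ?_
      have hs := slashS_diff j k (rep_spec hr).1 hF.1
      exact mulS_diff hs (differentiable_conj hs)
    exact this.congr fun τ hτ => by rw [GG, if_pos hτ]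
  · intro γ hγ τ hτ
    rw [← slashS_of_wt _ _ hγ _ hτ, slash_GG hF hγ hτ, sum_rep _ (fS_red hF hτ) hγ, GG, if_pos hτ]
  · intro γ hγ τ₁ hτ₁
    have h1 : Tendsto (fun t : ℝ => ∑ r ∈ RR, fS j k F (diagH τ₁ (t * I)) (rep r * γ)) atTop
        (𝓝 (∑ r ∈ RR, 0)) := by
      refine tendsto_finsetSum _ fun r hr => ?_
      have hm := Sp4Z_mul (rep_spec hr).1 hγ
      have ha := hF.2.2.1 _ hm τ₁ hτ₁
      have hb := hF.2.2.1 _ hm (-star τ₁) (by simpa using hτ₁)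
      have hb' := (continuous_star.tendsto (0 : Fin (j + 1) → ℂ)).comp hb
      have hc := ((continuous_mulS j).tendsto (0, star 0)).comp (ha.prodMk_nhds hb')
      simp only [star_zero, mulS_zero] at hc
      refine hc.congr fun t => ?_
      simp only [fS, cH_diagH]
      rfl
    rw [Finset.sum_const_zero] at h1
    refine h1.congr' ?_
    filter_upwards [eventually_gt_atTop 0] with t ht
    exact (slash_GG hF hγ (diagH_mem hτ₁ ht)).symm
  · intro τ hτ
    rw [GG, if_neg hτ]

lemma one_mem : (1 : Matrix (Fin 4) (Fin 4) ℤ) ∈ Sp4Z := by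
  show (1 : Matrix (Fin 4) (Fin 4) ℤ)ᵀ * J4 * 1 = J4
  simp

lemma PV_sum (j : ℕ) {ι : Type*} (s : Finset ι) (f : ι → Fin (j + 1) → ℂ) (x y : ℂ) :
    PV j (∑ r ∈ s, f r) x y = ∑ r ∈ s, PV j (f r) x y := by
  simp only [PV, Finset.sum_apply, Finset.sum_mul]
  rw [Finset.sum_comm]

lemma GG_zero (hF : IsSiegelCuspForm j k Sp4Z2 (fun _ => 1) F) (h : GG j k F = 0) : F = 0 := by
  have key : ∀ τ ∈ H2, F τ = 0 := by
    refine identity_thm hF.1 fun τ hτ hre => ?_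
    have hc : cH τ = τ := by
      funext a b
      apply Complex.ext <;> simp [cH, hre]
    have h1 := congrFun h τ
    rw [GG, if_pos hτ] at h1
    have hR : (1 : Matrix (Fin 4) (Fin 4) (ZMod 2)) ∈ RR := mem_RR.2 ⟨1, one_mem, red_one⟩
    have hs := rep_spec hR
    rw [← slash_level hF hs.1 hs.2 hτ]
    refine PV_inj_real j _ fun y => ?_
    have h2 := congrArg (fun v => PV (2 * j) v 1 (y : ℂ)) h1
    simp only [PV_sum, fS, PV_mulS, PV_cv, hc] at h2
    have h3 : ∑ r ∈ RR, Complex.normSq (PV j (slashS j k (rep r) F τ) 1 (y : ℂ)) = 0 := by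
      have e : PV (2 * j) ((0 : (Fin 2 → Fin 2 → ℂ) → (Fin (2 * j + 1) → ℂ)) τ) 1 (y : ℂ) = 0 := by
        simp [PV]
      rw [e] at h2
      have h4 : ((∑ r ∈ RR, Complex.normSq (PV j (slashS j k (rep r) F τ) 1 (y : ℂ)) : ℝ) : ℂ) = 0 := by
        rw [← h2, Complex.ofReal_sum]
        refine Finset.sum_congr rfl fun r _ => ?_
        rw [← Complex.mul_conj]
        simp
      exact_mod_cast h4
    exact Complex.normSq_eq_zero.1
      ((Finset.sum_eq_zero_iff_of_nonneg fun r _ => Complex.normSq_nonneg _).1 h3 1 hR)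
  funext τ
  by_cases hτ : τ ∈ H2
  · exact key τ hτ
  · exact hF.2.2.2 τ hτ

end main

/-- Let `j ≥ 0` and `k ∈ {1,2}`. If `S_{j,k}(Γ₂[2])` is nonzero, then `S_{2j,2k}(Γ₂)` is
nonzero. -/
theorem nonzero_level_two_implies_nonzero_level_one (j : ℕ) (k : ℤ) (hk : k = 1 ∨ k = 2)
    (h : SiegelCusp j k Sp4Z2 (fun _ => 1) ≠ ⊥) :
    SiegelCusp (2 * j) (2 * k) Sp4Z (fun _ => 1) ≠ ⊥ := by
  obtain ⟨F, hF, hne⟩ := Submodule.exists_mem_ne_zero_of_ne_bot h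
  have hF : IsSiegelCuspForm j k Sp4Z2 (fun _ => 1) F := hF
  intro hbot
  have hG : GG j k F ∈ SiegelCusp (2 * j) (2 * k) Sp4Z (fun _ => 1) := GG_cusp hF
  rw [hbot, Submodule.mem_bot] at hG
  exact hne (GG_zero hF hG)
end
end
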